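/- Let ψ₁, ψ₂ ∈ [0,1), let s₁, s₂ ≤ 0 be reals, and set Σ := diag(s₁, s₂). Then for every square-integrable ζ : [0,1] → ℝ², ∫₀¹ ζ(ξ)ᵀ Q(ξ) Σ [ζ(ξ) + (𝒦₂ζ)] dξ ≤ 0. Consequently, Assumption 2 holds for every map Σ : ℝ² → M₂(ℝ) whose values are diagonal matrices with nonpositive diagonal entries; in particular it holds for the tire friction source Σ(y) := diag(−σ₁|y₁|_ε/μ₁(y₁), −σ₂|y₂|_ε/μ₂(y₂)) with |v|_ε := √(v² + ε), ε ≥ 0, and μ_i : ℝ → [μ_min, ∞), μ_min > 0. -/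

import Mathlib

open MeasureTheory Matrix Set

noncomputable section

attribute [local instance] Matrix.normedAddCommGroup Matrix.normedSpace

abbrev Vec2 := Fin 2 → ℝ
abbrev Mat2 := Matrix (Fin 2) (Fin 2) ℝ

/-- Nondimensional pressure distribution `p̄(ξ) = (a/(1-e^{-a})) e^{-aξ}`. -/
def pbar (a ξ : ℝ) : ℝ := a / (1 - Real.exp (-a)) * Real.exp (-a * ξ)

/-- The physical parameters of the single-track tire model. -/
structure TireParams where
  vx : ℝ
  L1 : ℝ
  L2 : ℝ
  Fz1 : ℝ
  Fz2 : ℝ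
  σ1 : ℝ
  σ2 : ℝ
  a1 : ℝ
  a2 : ℝ
  φ1 : ℝ
  φ2 : ℝ
  vx_pos : 0 < vx
  L1_pos : 0 < L1
  L2_pos : 0 < L2
  Fz1_pos : 0 < Fz1
  Fz2_pos : 0 < Fz2
  σ1_pos : 0 < σ1
  σ2_pos : 0 < σ2
  a1_pos : 0 < a1
  a2_pos : 0 < a2
  φ1_mem : φ1 ∈ Set.Ioc (0:ℝ) 1
  φ2_mem : φ2 ∈ Set.Ioc (0:ℝ) 1

namespace TireParams

variable (P : TireParams)

def ψ1 : ℝ := 1 - P.φ1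
def ψ2 : ℝ := 1 - P.φ2

def Λmat : Mat2 := Matrix.diagonal ![P.vx / P.L1, P.vx / P.L2]

def Hmat : Mat2 := (2:ℝ) • Matrix.diagonal ![P.φ1, P.φ2]

def K1 (ξ : ℝ) : Mat2 :=
  Matrix.diagonal ![P.Fz1 * P.σ1 * pbar P.a1 ξ, P.Fz2 * P.σ2 * pbar P.a2 ξ]

def K2 (ξ : ℝ) : Mat2 :=
  -Matrix.diagonal ![P.ψ1 * pbar P.a1 ξ, P.ψ2 * pbar P.a2 ξ]

def K3 (ξ : ℝ) : Mat2 :=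
  -P.vx • Matrix.diagonal ![P.ψ1 / P.L1 * deriv (pbar P.a1) ξ, P.ψ2 / P.L2 * deriv (pbar P.a2) ξ]

def K4 : Mat2 :=
  P.vx • Matrix.diagonal ![P.ψ1 / P.L1 * pbar P.a1 1, P.ψ2 / P.L2 * pbar P.a2 1]

def Q (ξ : ℝ) : Mat2 := P.K1 ξ * (P.Hmat)⁻¹

/-- `(𝒦ζ) = ∫₀¹ K(ξ) ζ(ξ) dξ`. -/
def Kop (K : ℝ → Mat2) (ζ : ℝ → Vec2) : Vec2 := ∫ ξ in (0:ℝ)..1, (K ξ).mulVec (ζ ξ)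

def K1op (ζ : ℝ → Vec2) : Vec2 := Kop P.K1 ζ

def K2op (ζ : ℝ → Vec2) : Vec2 := Kop P.K2 ζ

/-- `(𝒦₃ζ) = ∫₀¹ K₃(ξ)ζ(ξ)dξ + K₄ ζ(1)`. -/
def K3op (ζ : ℝ → Vec2) : Vec2 := Kop P.K3 ζ + (P.K4).mulVec (ζ 1)

/-- `(𝒜ζ)(ξ) = -Λ ζ'(ξ) + (𝒦₃ζ)`, expressed through a given derivative `ζ'`. -/
def Aop (ζ ζ' : ℝ → Vec2) (ξ : ℝ) : Vec2 := -(P.Λmat).mulVec (ζ' ξ) + P.K3op ζ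

end TireParams

/-- `ζ` is C¹ on `[0,1]` with derivative `ζ'`. -/
def IsC1On01 (ζ ζ' : ℝ → Vec2) : Prop :=
  (∀ ξ ∈ Icc (0:ℝ) 1, HasDerivWithinAt ζ (ζ' ξ) (Icc (0:ℝ) 1) ξ) ∧
    ContinuousOn ζ' (Icc (0:ℝ) 1)

/-- Square integrability on `(0,1)`. -/
def SqIntegrableOn01 (ζ : ℝ → Vec2) : Prop :=
  Measurable ζ ∧ IntervalIntegrable (fun ξ => ∑ i, (ζ ξ i) ^ 2) volume 0 1

/-- Assumption 1 (strict dissipativity of `𝒜`). -/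
def Assumption1 (P : TireParams) (ω : ℝ) : Prop :=
  ∀ ζ ζ' : ℝ → Vec2, IsC1On01 ζ ζ' → ζ 0 = 0 →
    (∫ ξ in (0:ℝ)..1, P.Aop ζ ζ' ξ ⬝ᵥ (P.Q ξ).mulVec (ζ ξ)) ≤
      -ω * ∫ ξ in (0:ℝ)..1, ∑ i, (ζ ξ i) ^ 2

/-- Assumption 2 (dissipativity of the source `Σ`). -/
def Assumption2 (P : TireParams) (S : Vec2 → Mat2) : Prop :=
  ∀ y : Vec2, ∀ ζ : ℝ → Vec2, SqIntegrableOn01 ζ →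
    (∫ ξ in (0:ℝ)..1, ζ ξ ⬝ᵥ (P.Q ξ).mulVec ((S y).mulVec (ζ ξ + P.K2op ζ))) ≤ 0

lemma pbar_pos {a : ℝ} (ha : 0 < a) (ξ : ℝ) : 0 < pbar a ξ := by
  have h : Real.exp (-a) < 1 := by
    rw [Real.exp_lt_one_iff]; linarith
  exact mul_pos (div_pos ha (by linarith)) (Real.exp_pos _)

lemma pbar_cont (a : ℝ) : Continuous (pbar a) := by
  unfold pbar; fun_prop

lemma pbar_integral {a : ℝ} (ha : 0 < a) : ∫ ξ in (0:ℝ)..1, pbar a ξ = 1 := by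
  have h : Real.exp (-a) < 1 := by
    rw [Real.exp_lt_one_iff]; linarith
  have h' : 1 - Real.exp (-a) ≠ 0 := by linarith
  have hd : ∀ x ∈ Set.uIcc (0:ℝ) 1,
      HasDerivAt (fun ξ => -(1 / (1 - Real.exp (-a))) * Real.exp (-a * ξ)) (pbar a x) x := by
    intro x _
    have h1 : HasDerivAt (fun ξ : ℝ => -a * ξ) (-a) x := by
      simpa using (hasDerivAt_id x).const_mul (-a)
    have h2 := (h1.exp).const_mul (-(1 / (1 - Real.exp (-a))))
    have h3 : -(1 / (1 - Real.exp (-a))) * (Real.exp (-a * x) * -a) = pbar a x := by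
      unfold pbar
      ring
    rw [h3] at h2
    exact h2
  rw [intervalIntegral.integral_eq_sub_of_hasDerivAt hd
    ((pbar_cont a).intervalIntegrable 0 1)]
  simp only [mul_one, mul_zero, Real.exp_zero]
  field_simp
  ring

lemma sq_int_int {z : ℝ → ℝ} (hz : Measurable z)
    (hz2 : IntervalIntegrable (fun ξ => z ξ ^ 2) volume 0 1) :
    IntervalIntegrable z volume 0 1 := by
  have h1 : IntervalIntegrable (fun ξ => z ξ ^ 2 + 1) volume 0 1 :=
    hz2.add intervalIntegrable_const
  refine h1.mono_fun hz.aestronglyMeasurable (Filter.Eventually.of_forall fun x => ?_)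
  simp only [Real.norm_eq_abs]
  rw [abs_of_nonneg (by positivity : 0 ≤ z x ^ 2 + 1)]
  have := sq_abs (z x)
  nlinarith [sq_nonneg (|z x| - 1), abs_nonneg (z x)]

lemma pz_int (a : ℝ) {z : ℝ → ℝ} (hz : IntervalIntegrable z volume 0 1) :
    IntervalIntegrable (fun ξ => pbar a ξ * z ξ) volume 0 1 :=
  hz.continuousOn_mul (pbar_cont a).continuousOn

lemma jensen_p {a : ℝ} (ha : 0 < a) {z : ℝ → ℝ} (hz : Measurable z)
    (hz2 : IntervalIntegrable (fun ξ => z ξ ^ 2) volume 0 1) :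
    (∫ ξ in (0:ℝ)..1, pbar a ξ * z ξ) ^ 2 ≤ ∫ ξ in (0:ℝ)..1, pbar a ξ * z ξ ^ 2 := by
  have i1 := pz_int a (sq_int_int hz hz2)
  have i2 := pz_int a hz2
  have i0 := (pbar_cont a).intervalIntegrable (μ := volume) 0 1
  set m := ∫ ξ in (0:ℝ)..1, pbar a ξ * z ξ with hm
  have h0 : 0 ≤ ∫ ξ in (0:ℝ)..1, pbar a ξ * (z ξ - m) ^ 2 :=
    intervalIntegral.integral_nonneg (by norm_num)
      fun x _ => mul_nonneg (pbar_pos ha x).le (sq_nonneg _)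
  have h1 : (∫ ξ in (0:ℝ)..1, pbar a ξ * (z ξ - m) ^ 2) =
      ∫ ξ in (0:ℝ)..1, ((pbar a ξ * z ξ ^ 2 - (2 * m) * (pbar a ξ * z ξ)) + m ^ 2 * pbar a ξ) := by
    congr 1; ext x; ring
  rw [h1, intervalIntegral.integral_add (i2.sub (i1.const_mul _)) (i0.const_mul _),
    intervalIntegral.integral_sub i2 (i1.const_mul _), intervalIntegral.integral_const_mul,
    intervalIntegral.integral_const_mul, pbar_integral ha, ← hm] at h0
  nlinarith

lemma scalar_int (a b k : ℝ) {z : ℝ → ℝ} (hz : Measurable z)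
    (hz2 : IntervalIntegrable (fun ξ => z ξ ^ 2) volume 0 1) :
    IntervalIntegrable (fun ξ => b * (pbar a ξ * z ξ ^ 2) - b * k * (pbar a ξ * z ξ)) volume 0 1 :=
  ((pz_int a hz2).const_mul _).sub ((pz_int a (sq_int_int hz hz2)).const_mul _)

lemma scalar_le {a b ψ : ℝ} (ha : 0 < a) (hb : b ≤ 0) (h0 : 0 ≤ ψ) (h1 : ψ ≤ 1) {z : ℝ → ℝ}
    (hz : Measurable z) (hz2 : IntervalIntegrable (fun ξ => z ξ ^ 2) volume 0 1) :
    (∫ ξ in (0:ℝ)..1, (b * (pbar a ξ * z ξ ^ 2) -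
      b * (ψ * ∫ t in (0:ℝ)..1, pbar a t * z t) * (pbar a ξ * z ξ))) ≤ 0 := by
  rw [intervalIntegral.integral_sub ((pz_int a hz2).const_mul _)
    ((pz_int a (sq_int_int hz hz2)).const_mul _), intervalIntegral.integral_const_mul,
    intervalIntegral.integral_const_mul]
  have hj := jensen_p ha hz hz2
  set m := ∫ ξ in (0:ℝ)..1, pbar a ξ * z ξ
  have : 0 ≤ (∫ ξ in (0:ℝ)..1, pbar a ξ * z ξ ^ 2) - ψ * m ^ 2 := by
    nlinarith [mul_nonneg (sub_nonneg.2 h1) (sq_nonneg m)]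
  nlinarith [mul_nonneg (neg_nonneg.2 hb) this]

lemma Q_eq (P : TireParams) (ξ : ℝ) : P.Q ξ = Matrix.diagonal
    ![P.Fz1 * P.σ1 / (2 * P.φ1) * pbar P.a1 ξ, P.Fz2 * P.σ2 / (2 * P.φ2) * pbar P.a2 ξ] := by
  have h1 := P.φ1_mem.1.ne'
  have h2 := P.φ2_mem.1.ne'
  have hH : (P.Hmat)⁻¹ = Matrix.diagonal ![1 / (2 * P.φ1), 1 / (2 * P.φ2)] := by
    apply Matrix.inv_eq_right_inv
    ext i j
    fin_cases i <;> fin_cases j <;> simp [TireParams.Hmat] <;> field_simp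
  rw [TireParams.Q, hH, TireParams.K1, Matrix.diagonal_mul_diagonal]
  congr 1
  ext i
  fin_cases i <;> simp <;> ring

lemma K2op_eq (P : TireParams) {ζ : ℝ → Vec2}
    (h1 : IntervalIntegrable (fun ξ => ζ ξ 0) volume 0 1)
    (h2 : IntervalIntegrable (fun ξ => ζ ξ 1) volume 0 1) :
    P.K2op ζ 0 = -(P.ψ1 * ∫ t in (0:ℝ)..1, pbar P.a1 t * ζ t 0) ∧
    P.K2op ζ 1 = -(P.ψ2 * ∫ t in (0:ℝ)..1, pbar P.a2 t * ζ t 1) := by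
  have e0 : ∀ ξ, ((P.K2 ξ).mulVec (ζ ξ)) 0 = -P.ψ1 * (pbar P.a1 ξ * ζ ξ 0) := by
    intro ξ; simp [TireParams.K2, Matrix.neg_mulVec, Matrix.mulVec_diagonal]; ring
  have e1 : ∀ ξ, ((P.K2 ξ).mulVec (ζ ξ)) 1 = -P.ψ2 * (pbar P.a2 ξ * ζ ξ 1) := by
    intro ξ; simp [TireParams.K2, Matrix.neg_mulVec, Matrix.mulVec_diagonal]; ring
  have hi : ∀ i, Integrable (fun ξ => ((P.K2 ξ).mulVec (ζ ξ)) i)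
      (volume.restrict (Set.Ioc (0:ℝ) 1)) := by
    intro i
    fin_cases i
    · simp only [Fin.zero_eta, e0]
      exact ((pz_int _ h1).const_mul _).1
    · simp only [Fin.mk_one, e1]
      exact ((pz_int _ h2).const_mul _).1
  have he : ∀ i, P.K2op ζ i = ∫ ξ in (0:ℝ)..1, ((P.K2 ξ).mulVec (ζ ξ)) i := by
    intro i
    unfold TireParams.K2op TireParams.Kop
    rw [intervalIntegral.integral_of_le zero_le_one, intervalIntegral.integral_of_le zero_le_one]
    exact MeasureTheory.eval_integral hi i
  refine ⟨?_, ?_⟩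
  · rw [he]; simp only [e0]; rw [intervalIntegral.integral_const_mul]; ring
  · rw [he]; simp only [e1]; rw [intervalIntegral.integral_const_mul]; ring

lemma main_le (P : TireParams) (s1 s2 : ℝ) (hs1 : s1 ≤ 0) (hs2 : s2 ≤ 0) (ζ : ℝ → Vec2)
    (hζ : SqIntegrableOn01 ζ) :
    (∫ ξ in (0:ℝ)..1,
      ζ ξ ⬝ᵥ (P.Q ξ).mulVec ((Matrix.diagonal ![s1, s2]).mulVec (ζ ξ + P.K2op ζ))) ≤ 0 := by
  obtain ⟨hm, hi⟩ := hζ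
  have hmi : ∀ i, Measurable fun ξ => ζ ξ i := fun i => (measurable_pi_apply i).comp hm
  have hsq : ∀ i, IntervalIntegrable (fun ξ => ζ ξ i ^ 2) volume 0 1 := by
    intro i
    refine hi.mono_fun ((hmi i).pow_const 2).aestronglyMeasurable
      (Filter.Eventually.of_forall fun x => ?_)
    have hs : 0 ≤ ∑ j, ζ x j ^ 2 := Finset.sum_nonneg fun j _ => sq_nonneg _
    simp only [Real.norm_eq_abs]
    rw [abs_of_nonneg (sq_nonneg _), abs_of_nonneg hs]
    exact Finset.single_le_sum (f := fun j => ζ x j ^ 2) (fun j _ => sq_nonneg _)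
      (Finset.mem_univ i)
  obtain ⟨k0, k1⟩ := K2op_eq P (sq_int_int (hmi 0) (hsq 0)) (sq_int_int (hmi 1) (hsq 1))
  have b1 : P.Fz1 * P.σ1 / (2 * P.φ1) * s1 ≤ 0 := by
    have := P.Fz1_pos; have := P.σ1_pos; have := P.φ1_mem.1
    exact mul_nonpos_of_nonneg_of_nonpos (by positivity) hs1
  have b2 : P.Fz2 * P.σ2 / (2 * P.φ2) * s2 ≤ 0 := by
    have := P.Fz2_pos; have := P.σ2_pos; have := P.φ2_mem.1
    exact mul_nonpos_of_nonneg_of_nonpos (by positivity) hs2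
  have p1 : 0 ≤ P.ψ1 ∧ P.ψ1 ≤ 1 := by
    have := P.φ1_mem.1; have := P.φ1_mem.2; unfold TireParams.ψ1; constructor <;> linarith
  have p2 : 0 ≤ P.ψ2 ∧ P.ψ2 ≤ 1 := by
    have := P.φ2_mem.1; have := P.φ2_mem.2; unfold TireParams.ψ2; constructor <;> linarith
  have r1 := scalar_le P.a1_pos b1 p1.1 p1.2 (hmi 0) (hsq 0)
  have r2 := scalar_le P.a2_pos b2 p2.1 p2.2 (hmi 1) (hsq 1)
  refine le_trans (le_of_eq ?_) (add_nonpos r1 r2)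
  rw [← intervalIntegral.integral_add (scalar_int _ _ _ (hmi 0) (hsq 0))
    (scalar_int _ _ _ (hmi 1) (hsq 1))]
  congr 1
  ext ξ
  rw [Q_eq]
  simp only [dotProduct, Fin.sum_univ_two, Matrix.mulVec_diagonal, Pi.add_apply, k0, k1,
    Matrix.cons_val_zero, Matrix.cons_val_one]
  ring

/-- for a constant diagonal matrix `Σ = diag(s₁,s₂)` with `s₁,s₂ ≤ 0`,
`∫₀¹ ζᵀQΣ[ζ + 𝒦₂ζ] dξ ≤ 0` for every square-integrable `ζ`; consequently Assumption 2
holds for every source map with diagonal nonpositive values. -/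
theorem statement6 (P : TireParams) (s1 s2 : ℝ) (hs1 : s1 ≤ 0) (hs2 : s2 ≤ 0) :
    (∀ ζ : ℝ → Vec2, SqIntegrableOn01 ζ →
      (∫ ξ in (0:ℝ)..1,
          ζ ξ ⬝ᵥ (P.Q ξ).mulVec ((Matrix.diagonal ![s1, s2]).mulVec (ζ ξ + P.K2op ζ))) ≤ 0) ∧
    (∀ S : Vec2 → Mat2,
      (∀ y : Vec2, ∃ d1 d2 : ℝ, d1 ≤ 0 ∧ d2 ≤ 0 ∧ S y = Matrix.diagonal ![d1, d2]) →
      Assumption2 P S) := by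
  refine ⟨main_le P s1 s2 hs1 hs2, ?_⟩
  intro S hS y ζ hζ
  obtain ⟨d1, d2, h1, h2, h⟩ := hS y
  rw [h]
  exact main_le P d1 d2 h1 h2 ζ hζ
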